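/- For every β with 0 < β < 1/4 there exist constants C < ∞ and ε₀ > 0 such that for every z ∈ bD and every 0 < ε < ε₀: ∫_{bD} | Δ(w, z+εN(z))^{−1} − Δ(w,z)^{−1} | dH³(w) ≤ C·ε^β. (The integrand is interpreted as +∞ at w = z, where Δ(w,z)=0.) -/

import Mathlib

open MeasureTheory Complex
open scoped ENNReal

noncomputable section

/-- `ℂ²` with the Euclidean metric. -/
abbrev C2 := EuclideanSpace ℂ (Fin 2)

instance : MeasurableSpace C2 := borel _
instance : BorelSpace C2 := ⟨rfl⟩

/-- The defining function `ρ(z) = |z₂|² + (Re z₁)² + (Im z₁)⁴ − 1`. -/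
def rho (z : C2) : ℝ := ‖z 1‖ ^ 2 + (z 0).re ^ 2 + (z 0).im ^ 4 - 1

/-- The boundary `bD = {ρ = 0}`. -/
def bD : Set C2 := {z | rho z = 0}

/-- The Cauchy–Leray denominator
`Δ(w,z) = (u₁ − 2i v₁³)(w₁ − z₁) + conj(w₂)(w₂ − z₂)`. -/
def Delta (w z : C2) : ℂ :=
  (((w 0).re : ℂ) - 2 * I * ((w 0).im : ℂ) ^ 3) * (w 0 - z 0)
    + (starRingEnd ℂ) (w 1) * (w 1 - z 1)
/-- The real gradient `∇ρ` of `ρ` on `ℝ⁴ ≅ ℂ²`, written as a vector in `ℂ²`: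
`∇ρ(z) = (2u₁ + 4v₁³ i, 2z₂)`. -/
def gradRho (z : C2) : C2 :=
  (WithLp.equiv 2 (Fin 2 → ℂ)).symm
    ![(2 * (z 0).re : ℝ) + (4 * (z 0).im ^ 3 : ℝ) * I, 2 * z 1]

/-- The inward unit normal `N(z) = −∇ρ(z)/|∇ρ(z)|`. -/
def Nvec (z : C2) : C2 := (-‖gradRho z‖⁻¹ : ℝ) • gradRho z

/-!
By convexity of `ρ`, `2 Re Δ(w, ζ)` dominates `ρ(w) - ρ(ζ)` plus a square in three real coordinates
of `w - ζ` and a quartic in the fourth. For `ζ` in the closure of `D`, the part of `bD` where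
`|Δ(·, ζ)| ≤ r` therefore lies in a box with sides `r^{1/2}, r^{1/4}, r^{1/2}, r^{1/2}`. Since `bD`
is a finite union of Lipschitz graphs over coordinate hyperplanes, this part has measure
`O(r^{5/4})`, uniformly in `ζ`, and a dyadic decomposition bounds `∫ |Δ(·, ζ)|^{-s}` for `s < 5/4`.
Finally `|a⁻¹ - b⁻¹| ≤ 2 |a - b|^β (|a|^{-1-β} + |b|^{-1-β})`, applied to the two values of `Δ`,
which differ by at most `4ε`, reduces the theorem to the exponent `s = 1 + β`.
-/

open Set
open scoped NNReal

section SublevelSets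

variable {α : Type*} [MeasurableSpace α] {μ : Measure α} {q : α → ℝ≥0∞} {s : ℝ}

lemma rpow_neg_le_one_add_tsum_dyadic (hs : 0 < s) (x : ℝ≥0∞) :
    x ^ (-s) ≤ 1 + ∑' k : ℕ, (Iic ((2⁻¹ : ℝ≥0∞) ^ k)).indicator (fun _ ↦ (2 ^ s) ^ (k + 1)) x := by
  by_cases hx : ∀ k : ℕ, x ≤ 2⁻¹ ^ k
  · have one_le (k : ℕ) : (1 : ℝ≥0∞) ≤
        (Iic ((2⁻¹ : ℝ≥0∞) ^ k)).indicator (fun _ ↦ (2 ^ s) ^ (k + 1)) x := by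
      rw [indicator_of_mem (mem_Iic.2 (hx k))]
      exact one_le_pow₀ (ENNReal.one_le_rpow one_le_two hs)
    have sum_eq_top := ENNReal.tsum_const_eq_top_of_ne_zero (α := ℕ) one_ne_zero
    rw [top_le_iff.1 (sum_eq_top.symm.trans_le (ENNReal.tsum_le_tsum one_le)), add_top]
    exact le_top
  push Not at hx
  have find_lt := Nat.find_spec hx
  rcases h : Nat.find hx with _ | k
  · rw [h, pow_zero] at find_lt
    exact (ENNReal.rpow_le_one_of_one_le_of_neg find_lt.le (by linarith)).trans le_self_add
  · have le_pow : x ≤ 2⁻¹ ^ k := not_lt.1 (Nat.find_min hx (h ▸ k.lt_succ_self))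
    rw [h, ← ENNReal.inv_pow, ENNReal.inv_lt_iff_inv_lt] at find_lt
    calc x ^ (-s) = (x⁻¹) ^ s := by rw [ENNReal.rpow_neg, ENNReal.inv_rpow]
      _ ≤ (2 ^ (k + 1)) ^ s := by gcongr
      _ = (2 ^ s) ^ (k + 1) := by
          rw [← ENNReal.rpow_natCast_mul, ← ENNReal.rpow_mul_natCast, mul_comm]
      _ = (Iic ((2⁻¹ : ℝ≥0∞) ^ k)).indicator (fun _ ↦ (2 ^ s) ^ (k + 1)) x := by
          rw [indicator_of_mem (mem_Iic.2 le_pow)]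
      _ ≤ _ := (ENNReal.le_tsum k).trans le_add_self

lemma lintegral_rpow_neg_le_of_measure_sublevel_le {A : ℝ≥0∞} {a : ℝ} (hs : 0 < s)
    (hq : Measurable q) (hA : ∀ r ≤ 1, μ (q ⁻¹' Iic r) ≤ A * r ^ a) :
    ∫⁻ x, q x ^ (-s) ∂μ ≤ μ univ + 2 ^ s * A * (1 - 2 ^ (s - a))⁻¹ := by
  have term_le (k : ℕ) : (2 ^ s) ^ (k + 1) * μ (q ⁻¹' Iic (2⁻¹ ^ k))
      ≤ 2 ^ s * A * (2 ^ (s - a)) ^ k :=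
    calc _ ≤ (2 ^ s) ^ (k + 1) * (A * (2⁻¹ ^ k) ^ a) := by
          gcongr
          exact hA _ (pow_le_one' (by simp) k)
      _ = _ := by
          rw [← ENNReal.rpow_natCast_mul, mul_comm (k : ℝ), ENNReal.rpow_mul_natCast,
            ENNReal.rpow_sub _ _ two_ne_zero ENNReal.ofNat_ne_top, div_eq_mul_inv,
            ENNReal.inv_rpow]
          ring
  calc ∫⁻ x, q x ^ (-s) ∂μ
      ≤ ∫⁻ x, 1 + ∑' k : ℕ, (q ⁻¹' Iic (2⁻¹ ^ k)).indicator (fun _ ↦ (2 ^ s) ^ (k + 1)) x ∂μ :=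
        lintegral_mono fun x ↦ rpow_neg_le_one_add_tsum_dyadic hs (q x)
    _ = μ univ + ∑' k : ℕ, (2 ^ s) ^ (k + 1) * μ (q ⁻¹' Iic (2⁻¹ ^ k)) := by
        rw [lintegral_add_left measurable_const, lintegral_one, lintegral_tsum fun k ↦
          (measurable_const.indicator (hq measurableSet_Iic)).aemeasurable]
        simp_rw [lintegral_indicator_const (hq measurableSet_Iic)]
    _ ≤ μ univ + ∑' k : ℕ, 2 ^ s * A * (2 ^ (s - a)) ^ k :=
        add_le_add_right (ENNReal.tsum_le_tsum term_le) _
    _ = _ := by rw [ENNReal.tsum_mul_left, ENNReal.tsum_geometric]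

end SublevelSets

section InverseInterpolation

variable {𝕜 : Type*} [NormedDivisionRing 𝕜] {a b : 𝕜} {β : ℝ}

lemma norm_inv_sub_inv_le_of_norm_le (ha : a ≠ 0) (hab : ‖a‖ ≤ ‖b‖) (hβ₀ : 0 ≤ β) (hβ₁ : β ≤ 1) :
    ‖a⁻¹ - b⁻¹‖ ≤ 2 * ‖a - b‖ ^ β * ‖a‖ ^ (-(1 + β)) := by
  have a_pos : 0 < ‖a‖ := norm_pos_iff.2 ha
  have b_pos : 0 < ‖b‖ := a_pos.trans_le hab
  have trivial_bound : ‖a⁻¹ - b⁻¹‖ ≤ 2 * ‖a‖⁻¹ := by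
    calc ‖a⁻¹ - b⁻¹‖ ≤ ‖a‖⁻¹ + ‖b‖⁻¹ := by simpa only [norm_inv] using norm_sub_le a⁻¹ b⁻¹
      _ ≤ ‖a‖⁻¹ + ‖a‖⁻¹ := by gcongr
      _ = 2 * ‖a‖⁻¹ := by ring
  have resolvent_bound : ‖a⁻¹ - b⁻¹‖ ≤ ‖a - b‖ * ‖a‖ ^ (-2 : ℝ) := by
    calc ‖a⁻¹ - b⁻¹‖ = ‖a - b‖ / (‖a‖ * ‖b‖) := by
          simpa only [dist_eq_norm] using dist_inv_inv₀ ha (norm_pos_iff.1 b_pos)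
      _ ≤ ‖a - b‖ / (‖a‖ * ‖a‖) := by gcongr
      _ = ‖a - b‖ * ‖a‖ ^ (-2 : ℝ) := by
          rw [Real.rpow_neg a_pos.le, Real.rpow_two, sq, div_eq_mul_inv]
  calc ‖a⁻¹ - b⁻¹‖ = ‖a⁻¹ - b⁻¹‖ ^ (1 - β) * ‖a⁻¹ - b⁻¹‖ ^ β := by
        rw [← Real.rpow_add' (norm_nonneg _) (by norm_num), sub_add_cancel, Real.rpow_one]
    _ ≤ (2 * ‖a‖⁻¹) ^ (1 - β) * (‖a - b‖ * ‖a‖ ^ (-2 : ℝ)) ^ β := by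
        have : 0 ≤ 1 - β := sub_nonneg.2 hβ₁
        gcongr
    _ = 2 ^ (1 - β) * ‖a - b‖ ^ β * ‖a‖ ^ (-(1 + β)) := by
        rw [Real.mul_rpow zero_le_two (by positivity),
          Real.mul_rpow (norm_nonneg _) (by positivity), ← Real.rpow_neg_one,
          ← Real.rpow_mul a_pos.le, ← Real.rpow_mul a_pos.le, mul_mul_mul_comm,
          ← Real.rpow_add a_pos]
        ring_nf
    _ ≤ 2 * ‖a - b‖ ^ β * ‖a‖ ^ (-(1 + β)) := by
        gcongr
        exact Real.rpow_le_self_of_one_le one_le_two (by linarith)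

lemma norm_inv_sub_inv_le (ha : a ≠ 0) (hb : b ≠ 0) (hβ₀ : 0 ≤ β) (hβ₁ : β ≤ 1) :
    ‖a⁻¹ - b⁻¹‖ ≤ 2 * ‖a - b‖ ^ β * (‖a‖ ^ (-(1 + β)) + ‖b‖ ^ (-(1 + β))) := by
  wlog hab : ‖a‖ ≤ ‖b‖ generalizing a b
  · rw [norm_sub_rev, norm_sub_rev a, add_comm (‖a‖ ^ _)]
    exact this hb ha (not_le.1 hab).le
  · refine (norm_inv_sub_inv_le_of_norm_le ha hab hβ₀ hβ₁).trans ?_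
    gcongr
    exact le_add_of_nonneg_right (by positivity)

lemma ite_top_norm_inv_sub_inv_le [Decidable (b = 0 ∨ a = 0)] {d : ℝ} (hd : 0 < d)
    (hab : ‖a - b‖ ≤ d) (hβ₀ : 0 ≤ β) (hβ₁ : β ≤ 1) :
    (if b = 0 ∨ a = 0 then ⊤ else ENNReal.ofReal ‖a⁻¹ - b⁻¹‖) ≤
      ENNReal.ofReal (2 * d ^ β) * (‖a‖ₑ ^ (-(1 + β)) + ‖b‖ₑ ^ (-(1 + β))) := by
  have factor_ne_zero : ENNReal.ofReal (2 * d ^ β) ≠ 0 := (ENNReal.ofReal_pos.2 (by positivity)).ne'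
  have zero_rpow : (0 : ℝ≥0∞) ^ (-(1 + β)) = ⊤ := ENNReal.zero_rpow_of_neg (by linarith)
  split_ifs with h
  · rcases h with rfl | rfl <;>
      simp only [enorm_zero, zero_rpow, add_top, top_add, ENNReal.mul_top factor_ne_zero, le_refl]
  · push Not at h
    have a_pos := norm_pos_iff.2 h.2
    have b_pos := norm_pos_iff.2 h.1
    rw [← ofReal_norm a, ← ofReal_norm b, ENNReal.ofReal_rpow_of_pos a_pos,
      ENNReal.ofReal_rpow_of_pos b_pos, ← ENNReal.ofReal_add (by positivity) (by positivity),
      ← ENNReal.ofReal_mul (by positivity)]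
    refine ENNReal.ofReal_le_ofReal ((norm_inv_sub_inv_le h.2 h.1 hβ₀ hβ₁).trans ?_)
    gcongr

end InverseInterpolation

section AntilipschitzProjection

variable {X : Type*} [MetricSpace X] [MeasurableSpace X] [BorelSpace X] {ι : Type*} [Fintype ι]

lemma hausdorffMeasure_le_mul_volume_image {S : Set X} {p : X → ι → ℝ} {K : ℝ≥0}
    (hp : AntilipschitzWith K (S.domRestrict p)) :
    μH[Fintype.card ι] S ≤ K ^ Fintype.card ι * volume (p '' S) := by
  have h := hp.le_hausdorffMeasure_image (Nat.cast_nonneg (Fintype.card ι)) univ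
  rwa [image_univ, range_domRestrict, hausdorffMeasure_pi_real, ENNReal.rpow_natCast,
    ← isometry_subtype_coe.hausdorffMeasure_image (.inl (Nat.cast_nonneg _)), image_univ,
    Subtype.range_coe] at h

end AntilipschitzProjection

section Superellipsoid

lemma pow_mul_abs_sub_le_abs_pow_sub_pow {x y δ : ℝ} (hδ : 0 ≤ δ) (hx : δ ≤ x) (hy : δ ≤ y)
    (k : ℕ) : δ ^ k * |x - y| ≤ |x ^ (k + 1) - y ^ (k + 1)| := by
  have hx₀ := hδ.trans hx
  have hy₀ := hδ.trans hy
  rw [← geom_sum₂_mul, abs_mul]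
  gcongr
  calc δ ^ k ≤ x ^ k * y ^ (k + 1 - 1 - k) := by
        rw [Nat.add_sub_cancel, Nat.sub_self, pow_zero, mul_one]
        gcongr
    _ ≤ ∑ i ∈ Finset.range (k + 1), x ^ i * y ^ (k + 1 - 1 - i) :=
        Finset.single_le_sum (f := fun i ↦ x ^ i * y ^ (k + 1 - 1 - i))
          (fun i _ ↦ by positivity) (Finset.self_mem_range_succ k)
    _ ≤ _ := le_abs_self _

/-- The superellipsoid `∑ i, x i ^ m i = 1`. It bounds a convex body when all exponents are even and
nonzero; the real coordinates of `bD` form such a set, with exponents `bDExponents`. -/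
def superellipsoid {ι : Type*} [Fintype ι] (m : ι → ℕ) : Set (ι → ℝ) := {x | ∑ i, x i ^ m i = 1}

section Coordinates

variable {ι : Type*} [Fintype ι] {m : ι → ℕ} {x : ι → ℝ}

lemma abs_le_one_of_sum_pow_le_one (hm : ∀ i, Even (m i)) (hm₀ : ∀ i, m i ≠ 0)
    (hx : ∑ i, x i ^ m i ≤ 1) (i : ι) : |x i| ≤ 1 := by
  have h : x i ^ m i ≤ ∑ i, x i ^ m i :=
    Finset.single_le_sum (f := fun i ↦ x i ^ m i) (fun j _ ↦ (hm j).pow_nonneg _)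
      (Finset.mem_univ i)
  rw [← (hm i).pow_abs] at h
  exact (pow_le_one_iff_of_nonneg (abs_nonneg _) (hm₀ i)).1 (h.trans hx)

lemma exists_inv_card_le_abs_of_sum_pow_eq_one (hm : ∀ i, Even (m i)) (hm₀ : ∀ i, m i ≠ 0)
    (hx : ∑ i, x i ^ m i = 1) : ∃ i, (Fintype.card ι : ℝ)⁻¹ ≤ |x i| := by
  by_contra! h
  have abs_le := abs_le_one_of_sum_pow_le_one hm hm₀ hx.le
  have pow_le (i : ι) : x i ^ m i ≤ |x i| := by
    rw [← (hm i).pow_abs]; exact pow_le_of_le_one (abs_nonneg _) (abs_le i) (hm₀ i)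
  have nonempty : Nonempty ι := by
    by_contra! h; simp at hx
  have : (1 : ℝ) < 1 := calc
    1 = ∑ i, x i ^ m i := hx.symm
    _ ≤ ∑ i, |x i| := Finset.sum_le_sum fun i _ ↦ pow_le i
    _ < ∑ _i : ι, (Fintype.card ι : ℝ)⁻¹ :=
        Finset.sum_lt_sum_of_nonempty Finset.univ_nonempty fun i _ ↦ h i
    _ = 1 := by simp
  exact this.false

end Coordinates

lemma abs_sub_le_mul_abs_pow_sub_pow {x y δ : ℝ} {k : ℕ} (hk : Even k) (hk₀ : k ≠ 0) (hδ : 0 < δ)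
    (σ : ℤˣ) (hx : δ ≤ σ • x) (hy : δ ≤ σ • y) :
    |x - y| ≤ (δ⁻¹) ^ (k - 1) * |x ^ k - y ^ k| := by
  have h := pow_mul_abs_sub_le_abs_pow_sub_pow hδ.le hx hy (k - 1)
  have sign_free : |σ • x - σ • y| = |x - y| ∧ (σ • x) ^ k = x ^ k ∧ (σ • y) ^ k = y ^ k := by
    rcases Int.units_eq_one_or σ with rfl | rfl
    · simp
    · simp [Units.smul_def, hk.neg_pow, abs_sub_comm, ← sub_eq_neg_add]
  rw [Nat.sub_add_cancel (Nat.one_le_iff_ne_zero.2 hk₀), sign_free.1, sign_free.2.1,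
    sign_free.2.2] at h
  rwa [inv_pow, ← div_eq_inv_mul, le_div_iff₀' (by positivity)]

variable {n : ℕ}

lemma abs_sub_le_mul_dist_removeNth {f : Fin (n + 1) → ℝ → ℝ} {x y L : Fin (n + 1) → ℝ}
    {j : Fin (n + 1)} {M : ℝ} (hsum : ∑ i, f i (x i) = ∑ i, f i (y i)) (hL₀ : 0 ≤ L) (hM₀ : 0 ≤ M)
    (hL : ∀ i, |f i (x i) - f i (y i)| ≤ L i * |x i - y i|)
    (hM : |x j - y j| ≤ M * |f j (x j) - f j (y j)|) :
    |x j - y j| ≤ M * (∑ i, L (j.succAbove i)) * dist (j.removeNth x) (j.removeNth y) := by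
  rw [Fin.sum_univ_succAbove _ j, Fin.sum_univ_succAbove _ j] at hsum
  have solve_for_j : f j (x j) - f j (y j) =
      -∑ i, (f (j.succAbove i) (x (j.succAbove i)) - f (j.succAbove i) (y (j.succAbove i))) := by
    rw [Finset.sum_sub_distrib]
    linarith
  rw [mul_assoc, Finset.sum_mul]
  refine hM.trans (mul_le_mul_of_nonneg_left ?_ hM₀)
  rw [solve_for_j, abs_neg]
  refine (Finset.abs_sum_le_sum_abs _ _).trans (Finset.sum_le_sum fun i _ ↦ (hL _).trans ?_)
  exact mul_le_mul_of_nonneg_left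
    (dist_le_pi_dist (j.removeNth x) (j.removeNth y) i) (hL₀ _)

variable {m : Fin (n + 1) → ℕ}

/-- The part of the superellipsoid on which `x j` has sign `σ` and absolute value at least
`1 / (n + 1)`. It is a Lipschitz graph over the hyperplane `x j = 0`. -/
def superellipsoidCap (m : Fin (n + 1) → ℕ) (j : Fin (n + 1)) (σ : ℤˣ) : Set (Fin (n + 1) → ℝ) :=
  superellipsoid m ∩ {x | ((n + 1 : ℕ) : ℝ)⁻¹ ≤ σ • x j}

lemma superellipsoid_subset_iUnion_cap (hm : ∀ i, Even (m i)) (hm₀ : ∀ i, m i ≠ 0) :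
    superellipsoid m ⊆ ⋃ (j) (σ), superellipsoidCap m j σ := by
  intro x hx
  obtain ⟨j, hj⟩ := exists_inv_card_le_abs_of_sum_pow_eq_one hm hm₀ hx
  rw [Fintype.card_fin] at hj
  simp only [mem_iUnion]
  rcases le_abs.1 hj with pos | neg
  · exact ⟨j, 1, hx, by simpa using pos⟩
  · exact ⟨j, -1, hx, by simpa [Units.smul_def] using neg⟩

lemma abs_sub_le_of_mem_superellipsoidCap (hm : ∀ i, Even (m i)) (hm₀ : ∀ i, m i ≠ 0)
    {x y : Fin (n + 1) → ℝ} {j : Fin (n + 1)} {σ : ℤˣ}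
    (hx : x ∈ superellipsoidCap m j σ) (hy : y ∈ superellipsoidCap m j σ) :
    |x j - y j| ≤ (n + 1) ^ (m j - 1) * (∑ i, (m (j.succAbove i) : ℝ)) *
      dist (j.removeNth x) (j.removeNth y) := by
  obtain ⟨hx, hxj⟩ := hx
  obtain ⟨hy, hyj⟩ := hy
  have hx₁ := abs_le_one_of_sum_pow_le_one hm hm₀ (mem_ofPred.1 hx).le
  have hy₁ := abs_le_one_of_sum_pow_le_one hm hm₀ (mem_ofPred.1 hy).le
  refine abs_sub_le_mul_dist_removeNth (f := fun i t ↦ t ^ m i) (L := fun i ↦ m i)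
    ((mem_ofPred.1 hx).trans (mem_ofPred.1 hy).symm) (fun i ↦ Nat.cast_nonneg _) (by positivity)
    (fun i ↦ ?_) ?_
  · calc |x i ^ m i - y i ^ m i| ≤ |x i - y i| * m i * max |x i| |y i| ^ (m i - 1) :=
          abs_pow_sub_pow_le ..
      _ ≤ |x i - y i| * m i * 1 := by
          gcongr
          exact pow_le_one₀ (by positivity) (max_le (hx₁ i) (hy₁ i))
      _ = m i * |x i - y i| := by ring
  · have h := abs_sub_le_mul_abs_pow_sub_pow (hm j) (hm₀ j) (by positivity) σ hxj hyj
    rwa [inv_inv, Nat.cast_succ] at h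

lemma antilipschitzWith_removeNth_superellipsoidCap (hm : ∀ i, Even (m i)) (hm₀ : ∀ i, m i ≠ 0)
    (j : Fin (n + 1)) (σ : ℤˣ) :
    AntilipschitzWith ((n + 1) ^ (∑ i, m i) * ∑ i, m i : ℕ)
      ((superellipsoidCap m j σ).domRestrict (j.removeNth (α := fun _ ↦ ℝ))) := by
  refine AntilipschitzWith.of_le_mul_dist ?_
  rintro ⟨x, hx⟩ ⟨y, hy⟩
  refine (dist_pi_le_iff (by positivity)).2 fun i ↦ ?_
  rw [Real.dist_eq]
  rcases Fin.eq_self_or_eq_succAbove j i with rfl | ⟨i, rfl⟩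
  · refine (abs_sub_le_of_mem_superellipsoidCap hm hm₀ hx hy).trans ?_
    have exponent_le : m i - 1 ≤ ∑ k, m k :=
      (Nat.sub_le _ _).trans (Finset.single_le_sum_of_canonicallyOrdered (Finset.mem_univ i))
    have sum_le : ∑ k, m (i.succAbove k) ≤ ∑ k, m k := by
      rw [Fin.sum_univ_succAbove _ i]
      exact Nat.le_add_left _ _
    refine mul_le_mul_of_nonneg_right ?_ dist_nonneg
    exact_mod_cast Nat.mul_le_mul (Nat.pow_le_pow_right n.succ_pos exponent_le) sum_le
  · have sum_pos : 0 < ∑ k, m k :=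
      Finset.sum_pos (fun k _ ↦ (hm₀ k).bot_lt) Finset.univ_nonempty
    have one_le : (1 : ℝ) ≤ ((n + 1) ^ (∑ k, m k) * ∑ k, m k : ℕ) := by
      exact_mod_cast Nat.succ_le_iff.2 (Nat.mul_pos (Nat.pow_pos n.succ_pos) sum_pos)
    exact (dist_le_pi_dist (j.removeNth x) (j.removeNth y) i).trans
      (le_mul_of_one_le_left dist_nonneg one_le)

lemma hausdorffMeasure_superellipsoidCap_inter_Icc_le (hm : ∀ i, Even (m i))
    (hm₀ : ∀ i, m i ≠ 0) (l u : Fin (n + 1) → ℝ) (j : Fin (n + 1)) (σ : ℤˣ) :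
    μH[n] (superellipsoidCap m j σ ∩ Icc l u) ≤
      ((n + 1) ^ (∑ i, m i) * ∑ i, m i : ℕ) ^ n * volume (Icc (j.removeNth l) (j.removeNth u)) := by
  have anti : AntilipschitzWith ((n + 1) ^ (∑ i, m i) * ∑ i, m i : ℕ)
      ((superellipsoidCap m j σ ∩ Icc l u).domRestrict (j.removeNth (α := fun _ ↦ ℝ))) :=
    fun x y ↦ antilipschitzWith_removeNth_superellipsoidCap hm hm₀ j σ ⟨x, x.2.1⟩ ⟨y, y.2.1⟩
  have le_image := hausdorffMeasure_le_mul_volume_image anti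
  rw [Fintype.card_fin] at le_image
  refine le_image.trans (mul_le_mul_right (measure_mono ?_) _)
  rintro _ ⟨x, ⟨-, hlx, hxu⟩, rfl⟩
  exact ⟨fun i ↦ hlx _, fun i ↦ hxu _⟩

lemma hausdorffMeasure_superellipsoid_inter_Icc_le (hm : ∀ i, Even (m i)) (hm₀ : ∀ i, m i ≠ 0)
    (l u : Fin (n + 1) → ℝ) :
    μH[n] (superellipsoid m ∩ Icc l u) ≤ 2 * ((n + 1) ^ (∑ i, m i) * ∑ i, m i : ℕ) ^ n *
      ∑ j : Fin (n + 1), volume (Icc (j.removeNth l) (j.removeNth u)) := by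
  set K : ℕ := (n + 1) ^ (∑ i, m i) * ∑ i, m i
  calc μH[n] (superellipsoid m ∩ Icc l u)
      ≤ μH[n] (⋃ (j) (σ), superellipsoidCap m j σ ∩ Icc l u) := by
        simp_rw [← iUnion_inter]
        exact measure_mono (inter_subset_inter_left _ (superellipsoid_subset_iUnion_cap hm hm₀))
    _ ≤ ∑ j, ∑ σ, μH[n] (superellipsoidCap m j σ ∩ Icc l u) :=
        (measure_iUnion_fintype_le _ _).trans
          (Finset.sum_le_sum fun j _ ↦ measure_iUnion_fintype_le _ _)
    _ ≤ ∑ j : Fin (n + 1), ∑ _σ : ℤˣ, K ^ n * volume (Icc (j.removeNth l) (j.removeNth u)) := by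
        gcongr with j _ σ
        exact hausdorffMeasure_superellipsoidCap_inter_Icc_le hm hm₀ l u j σ
    _ = _ := by
        simp_rw [Finset.sum_const, Finset.card_univ, Fintype.card_units_int, nsmul_eq_mul,
          ← Finset.mul_sum, mul_assoc, Nat.cast_ofNat]

end Superellipsoid

section Geometry

/-- The identification `ℂ² ≅ ℝ⁴`, `w ↦ (u₁, v₁, u₂, v₂)`. The target carries the sup metric, so that
its Hausdorff measure is normalised to be Lebesgue measure on coordinate hyperplanes. -/
def realCoords (w : C2) : Fin 4 → ℝ := ![(w 0).re, (w 0).im, (w 1).re, (w 1).im]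

/-- The exponents exhibiting `bD`, in the coordinates `realCoords`, as a superellipsoid. -/
def bDExponents : Fin 4 → ℕ := ![2, 4, 2, 2]

lemma even_bDExponents (i : Fin 4) : Even (bDExponents i) := by
  fin_cases i <;> decide

lemma bDExponents_ne_zero (i : Fin 4) : bDExponents i ≠ 0 := by
  fin_cases i <;> decide

variable {w z ζ : C2}

lemma sum_realCoords_pow (w : C2) : ∑ i, realCoords w i ^ bDExponents i = rho w + 1 := by
  simp only [Fin.sum_univ_four, realCoords, bDExponents, Matrix.cons_val, rho, Complex.sq_norm,
    Complex.normSq_apply]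
  ring

lemma realCoords_mem_superellipsoid_iff : realCoords w ∈ superellipsoid bDExponents ↔ w ∈ bD := by
  simp only [superellipsoid, bD, mem_ofPred, sum_realCoords_pow, add_eq_right]

lemma abs_realCoords_le_one (hw : rho w ≤ 0) (i : Fin 4) : |realCoords w i| ≤ 1 :=
  abs_le_one_of_sum_pow_le_one even_bDExponents bDExponents_ne_zero
    (by rw [sum_realCoords_pow]; linarith) i

lemma antilipschitzWith_realCoords : AntilipschitzWith 2 realCoords := by
  refine AntilipschitzWith.of_le_mul_dist fun p q ↦ ?_
  have coord_sq_le (i : Fin 4) :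
      (realCoords p i - realCoords q i) ^ 2 ≤ dist (realCoords p) (realCoords q) ^ 2 := by
    rw [← sq_abs, ← Real.dist_eq]
    exact pow_le_pow_left₀ dist_nonneg (dist_le_pi_dist _ _ i) 2
  have dist_sq_eq : dist p q ^ 2 = ∑ i, (realCoords p i - realCoords q i) ^ 2 := by
    rw [dist_eq_norm, EuclideanSpace.norm_sq_eq]
    simp only [Fin.sum_univ_two, Fin.sum_univ_four, realCoords, Matrix.cons_val, Complex.sq_norm,
      Complex.normSq_apply, PiLp.sub_apply, Complex.sub_re, Complex.sub_im]
    ring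
  refine le_of_sq_le_sq ?_ (by positivity)
  calc dist p q ^ 2 ≤ ∑ _i : Fin 4, dist (realCoords p) (realCoords q) ^ 2 :=
        dist_sq_eq.trans_le (Finset.sum_le_sum fun i _ ↦ coord_sq_le i)
    _ = _ := by
        rw [Finset.sum_const, Finset.card_fin, nsmul_eq_mul, NNReal.coe_ofNat]
        ring

lemma exists_hausdorffMeasure_bD_inter_box_le : ∃ K : ℝ≥0, ∀ l u : Fin 4 → ℝ,
    μH[3] (bD ∩ realCoords ⁻¹' Icc l u) ≤
      K * ∑ j : Fin 4, volume (Icc (j.removeNth l) (j.removeNth u)) := by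
  refine ⟨2 ^ (3 : ℝ) * (2 * ((3 + 1) ^ (∑ i, bDExponents i) * ∑ i, bDExponents i : ℕ) ^ 3),
    fun l u ↦ ?_⟩
  have image_subset : realCoords '' (bD ∩ realCoords ⁻¹' Icc l u) ⊆
      superellipsoid bDExponents ∩ Icc l u := by
    rintro _ ⟨w, ⟨hw, hbox⟩, rfl⟩
    exact ⟨realCoords_mem_superellipsoid_iff.2 hw, hbox⟩
  have superellipsoid_bound :=
    hausdorffMeasure_superellipsoid_inter_Icc_le even_bDExponents bDExponents_ne_zero l u
  rw [Nat.cast_ofNat] at superellipsoid_bound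
  calc _ ≤ (2 : ℝ≥0) ^ (3 : ℝ) * μH[3] (realCoords '' (bD ∩ realCoords ⁻¹' Icc l u)) :=
        antilipschitzWith_realCoords.le_hausdorffMeasure_image (by norm_num) _
    _ ≤ (2 : ℝ≥0) ^ (3 : ℝ) * μH[3] (superellipsoid bDExponents ∩ Icc l u) := by gcongr
    _ ≤ _ := by
        refine (mul_le_mul_right superellipsoid_bound _).trans_eq ?_
        rw [← mul_assoc, ENNReal.coe_mul, ENNReal.coe_rpow_of_nonneg _ (by norm_num)]
        norm_cast

lemma isClosed_bD : IsClosed bD :=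
  isClosed_eq (by unfold rho; fun_prop) continuous_const

lemma re_Delta (w ζ : C2) : (Delta w ζ).re =
    (w 0).re * ((w 0).re - (ζ 0).re) + 2 * (w 0).im ^ 3 * ((w 0).im - (ζ 0).im) +
      (w 1).re * ((w 1).re - (ζ 1).re) + (w 1).im * ((w 1).im - (ζ 1).im) := by
  simp only [Delta, ← ofReal_pow, add_re, mul_re, mul_im, sub_re, sub_im, ofReal_re, ofReal_im,
    re_ofNat, im_ofNat, I_re, I_im, conj_re, conj_im]
  ring

lemma rho_sub_rho_add_le_two_mul_re_Delta (w ζ : C2) :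
    rho w - rho ζ + ((w 0).re - (ζ 0).re) ^ 2 + ((w 0).im - (ζ 0).im) ^ 4 / 3 + ‖w 1 - ζ 1‖ ^ 2
      ≤ 2 * (Delta w ζ).re := by
  have quartic (v y : ℝ) : v ^ 4 - y ^ 4 + (v - y) ^ 4 / 3 ≤ 4 * v ^ 3 * (v - y) := by
    have : 4 * v ^ 3 * (v - y) - (v ^ 4 - y ^ 4 + (v - y) ^ 4 / 3) =
      2 / 3 * ((v - y) * (y + 2 * v)) ^ 2 := by ring
    linarith [sq_nonneg ((v - y) * (y + 2 * v))]
  simp only [re_Delta, rho, Complex.sq_norm, Complex.normSq_apply, Complex.sub_re, Complex.sub_im]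
  linarith [quartic (w 0).im (ζ 0).im]

/-- Half side lengths of a box containing `{w ∈ bD | ‖Delta w ζ‖ ≤ t ^ 4}` around `ζ`, in the
coordinates `realCoords`; the quartic direction is the long one. -/
def boxRadii (t : ℝ) : Fin 4 → ℝ := ![2 * t ^ 2, 2 * t, 2 * t ^ 2, 2 * t ^ 2]

lemma realCoords_mem_Icc_of_norm_Delta_le (hw : 0 ≤ rho w) (hζ : rho ζ ≤ 0) {t : ℝ} (ht : 0 ≤ t)
    (hΔ : ‖Delta w ζ‖ ≤ t ^ 4) :
    realCoords w ∈ Icc (realCoords ζ - boxRadii t) (realCoords ζ + boxRadii t) := by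
  have sum_le : ((w 0).re - (ζ 0).re) ^ 2 + ((w 0).im - (ζ 0).im) ^ 4 / 3 +
      (((w 1).re - (ζ 1).re) ^ 2 + ((w 1).im - (ζ 1).im) ^ 2) ≤ 2 * t ^ 4 := by
    have lower_bound := rho_sub_rho_add_le_two_mul_re_Delta w ζ
    rw [Complex.sq_norm, Complex.normSq_apply, ← sq, ← sq, sub_re, sub_im] at lower_bound
    linarith [(Complex.re_le_norm _).trans hΔ]
  have im_pow_le : ((w 0).im - (ζ 0).im) ^ 4 ≤ (2 * t) ^ 4 := by
    have : 0 ≤ t ^ 4 := by positivity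
    nlinarith
  have im_pow_nonneg : 0 ≤ ((w 0).im - (ζ 0).im) ^ 4 := by positivity
  have abs_sub_le (i : Fin 4) : |realCoords w i - realCoords ζ i| ≤ boxRadii t i := by
    fin_cases i <;> simp only [realCoords, boxRadii, Matrix.cons_val, Fin.reduceFinMk,
      Fin.zero_eta, Fin.mk_one]
    · exact abs_le_of_sq_le_sq (by nlinarith) (by positivity)
    · rw [← Even.pow_abs (by decide : Even 4)] at im_pow_le
      exact (pow_le_pow_iff_left₀ (abs_nonneg _) (by positivity) four_ne_zero).1 im_pow_le
    · exact abs_le_of_sq_le_sq (by nlinarith) (by positivity)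
    · exact abs_le_of_sq_le_sq (by nlinarith) (by positivity)
  exact ⟨fun i ↦ sub_le_comm.1 (abs_sub_le_iff.1 (abs_sub_le i)).2,
    fun i ↦ sub_le_iff_le_add'.1 (abs_sub_le_iff.1 (abs_sub_le i)).1⟩

lemma volume_face_box_le (c : Fin 4 → ℝ) {t : ℝ} (ht₀ : 0 ≤ t) (ht₁ : t ≤ 1) (j : Fin 4) :
    volume (Icc (j.removeNth (c - boxRadii t)) (j.removeNth (c + boxRadii t))) ≤
      ENNReal.ofReal (64 * t ^ 5) := by
  have boxRadii_nonneg (i : Fin 4) : 0 ≤ boxRadii t i := by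
    fin_cases i <;> simp [boxRadii, ht₀]
  have prod_le : ∏ i, 2 * boxRadii t (j.succAbove i) ≤ 64 * t ^ 5 := by
    have pow_le : t ^ 6 ≤ t ^ 5 := pow_le_pow_of_le_one ht₀ ht₁ (by norm_num)
    rw [Fin.prod_univ_three]
    fin_cases j
    · change 2 * (2 * t) * (2 * (2 * t ^ 2)) * (2 * (2 * t ^ 2)) ≤ _
      linarith
    · change 2 * (2 * t ^ 2) * (2 * (2 * t ^ 2)) * (2 * (2 * t ^ 2)) ≤ _
      linarith
    all_goals
      change 2 * (2 * t ^ 2) * (2 * (2 * t)) * (2 * (2 * t ^ 2)) ≤ _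
      linarith
  have side_eq (i : Fin 3) : j.removeNth (c + boxRadii t) i - j.removeNth (c - boxRadii t) i =
      2 * boxRadii t (j.succAbove i) := by
    simp only [Fin.removeNth, Pi.add_apply, Pi.sub_apply]
    ring
  simp_rw [Real.volume_Icc_pi, side_eq]
  rw [← ENNReal.ofReal_prod_of_nonneg fun i _ ↦ mul_nonneg zero_le_two (boxRadii_nonneg _)]
  exact ENNReal.ofReal_le_ofReal prod_le

lemma exists_hausdorffMeasure_norm_Delta_le : ∃ K : ℝ≥0, ∀ ζ, rho ζ ≤ 0 → ∀ t : ℝ, 0 ≤ t → t ≤ 1 →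
    μH[3] (bD ∩ {w | ‖Delta w ζ‖ ≤ t ^ 4}) ≤ K * ENNReal.ofReal (t ^ 5) := by
  obtain ⟨K, hK⟩ := exists_hausdorffMeasure_bD_inter_box_le
  refine ⟨K * 256, fun ζ hζ t ht₀ ht₁ ↦ ?_⟩
  calc _ ≤ μH[3]
          (bD ∩ realCoords ⁻¹' Icc (realCoords ζ - boxRadii t) (realCoords ζ + boxRadii t)) :=
        measure_mono fun w hw ↦
          ⟨hw.1, realCoords_mem_Icc_of_norm_Delta_le (le_of_eq hw.1.symm) hζ ht₀ hw.2⟩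
    _ ≤ K * ∑ _j : Fin 4, ENNReal.ofReal (64 * t ^ 5) := by
        refine (hK _ _).trans ?_
        gcongr with j
        exact volume_face_box_le _ ht₀ ht₁ j
    _ = _ := by
        rw [Finset.sum_const, Finset.card_fin, nsmul_eq_mul, ENNReal.ofReal_mul (by norm_num),
          ENNReal.coe_mul]
        norm_num [← mul_assoc]

lemma exists_hausdorffMeasure_enorm_Delta_le : ∃ K : ℝ≥0, ∀ ζ, rho ζ ≤ 0 → ∀ r : ℝ≥0∞, r ≤ 1 →
    μH[3] (bD ∩ (fun w ↦ ‖Delta w ζ‖ₑ) ⁻¹' Iic r) ≤ K * r ^ (5 / 4 : ℝ) := by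
  obtain ⟨K, hK⟩ := exists_hausdorffMeasure_norm_Delta_le
  refine ⟨K, fun ζ hζ r hr ↦ ?_⟩
  lift r to ℝ≥0 using (hr.trans_lt ENNReal.one_lt_top).ne
  have hr₁ : r ≤ 1 := by exact_mod_cast hr
  obtain ⟨t, rfl⟩ : ∃ t : ℝ≥0, t ^ 4 = r := ⟨r ^ (1 / 4 : ℝ), by
    rw [← NNReal.rpow_mul_natCast]; norm_num⟩
  have t_le_one : t ≤ 1 := (pow_le_one_iff (by norm_num)).1 hr₁
  have pow_rpow : ((t ^ 4 : ℝ≥0) : ℝ≥0∞) ^ (5 / 4 : ℝ) = ENNReal.ofReal ((t : ℝ) ^ 5) := by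
    rw [ENNReal.coe_pow, ← ENNReal.rpow_natCast_mul, ENNReal.ofReal_pow t.coe_nonneg,
      ENNReal.ofReal_coe_nnreal, ← ENNReal.rpow_natCast]
    norm_num
  rw [pow_rpow]
  refine (measure_mono ?_).trans (hK ζ hζ t t.coe_nonneg t_le_one)
  rintro w ⟨hw, hΔ⟩
  have nnnorm_le : ‖Delta w ζ‖₊ ≤ t ^ 4 := enorm_le_coe.1 hΔ
  exact ⟨hw, by exact_mod_cast nnnorm_le⟩

lemma hausdorffMeasure_bD_lt_top : μH[3] bD < ⊤ := by
  obtain ⟨K, hK⟩ := exists_hausdorffMeasure_bD_inter_box_le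
  have bD_subset : bD ⊆ bD ∩ realCoords ⁻¹' Icc (-1) 1 := fun w hw ↦
    ⟨hw, fun i ↦ (abs_le.1 (abs_realCoords_le_one (le_of_eq hw) i)).1,
      fun i ↦ (abs_le.1 (abs_realCoords_le_one (le_of_eq hw) i)).2⟩
  refine (measure_mono bD_subset).trans_lt ((hK _ _).trans_lt ?_)
  exact ENNReal.mul_lt_top ENNReal.coe_lt_top
    (ENNReal.sum_lt_top.2 fun j _ ↦ isCompact_Icc.measure_lt_top)

lemma measurable_enorm_Delta (ζ : C2) : Measurable fun w ↦ ‖Delta w ζ‖ₑ := by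
  have : Continuous fun w ↦ Delta w ζ := by
    unfold Delta
    fun_prop
  exact this.measurable.enorm

lemma exists_lintegral_enorm_Delta_rpow_neg_le {s : ℝ} (hs : 0 < s) (hs' : s < 5 / 4) :
    ∃ K : ℝ≥0, ∀ ζ, rho ζ ≤ 0 → ∫⁻ w in bD, ‖Delta w ζ‖ₑ ^ (-s) ∂μH[3] ≤ K := by
  obtain ⟨A, hA⟩ := exists_hausdorffMeasure_enorm_Delta_le
  have geometric_lt_top : (1 - (2 : ℝ≥0∞) ^ (s - 5 / 4))⁻¹ < ⊤ := by
    rw [ENNReal.inv_lt_top, tsub_pos_iff_lt]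
    exact ENNReal.rpow_lt_one_of_one_lt_of_neg ENNReal.one_lt_two (by linarith)
  have bound_ne_top : μH[3] bD + 2 ^ s * A * (1 - (2 : ℝ≥0∞) ^ (s - 5 / 4))⁻¹ ≠ ⊤ := by
    finiteness [hausdorffMeasure_bD_lt_top.ne, geometric_lt_top.ne]
  refine ⟨(μH[3] bD + 2 ^ s * A * (1 - (2 : ℝ≥0∞) ^ (s - 5 / 4))⁻¹).toNNReal, fun ζ hζ ↦ ?_⟩
  rw [ENNReal.coe_toNNReal bound_ne_top, ← Measure.restrict_apply_univ]
  refine lintegral_rpow_neg_le_of_measure_sublevel_le hs (measurable_enorm_Delta ζ) fun r hr ↦ ?_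
  rw [Measure.restrict_apply (measurable_enorm_Delta ζ measurableSet_Iic), inter_comm]
  exact hA ζ hζ r hr

lemma re_gradRho_zero (z : C2) : (gradRho z 0).re = 2 * (z 0).re := by
  simp [gradRho, -ofReal_mul, -ofReal_pow]

lemma im_gradRho_zero (z : C2) : (gradRho z 0).im = 4 * (z 0).im ^ 3 := by
  simp [gradRho, -ofReal_mul, -ofReal_pow]

lemma gradRho_one (z : C2) : gradRho z 1 = 2 * z 1 := by
  simp [gradRho]

lemma one_le_norm_gradRho (hz : 0 ≤ rho z) : 1 ≤ ‖gradRho z‖ := by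
  have norm_sq_eq : ‖gradRho z‖ ^ 2 = 4 * (rho z + 1 - (z 0).im ^ 4) + 16 * (z 0).im ^ 6 := by
    rw [EuclideanSpace.norm_sq_eq, Fin.sum_univ_two, gradRho_one, norm_mul, Complex.sq_norm,
      Complex.normSq_apply, re_gradRho_zero, im_gradRho_zero, Complex.norm_ofNat, rho]
    ring
  have quartic_le : 4 * (z 0).im ^ 4 ≤ 16 * (z 0).im ^ 6 + 3 := by
    nlinarith [mul_nonneg (sq_nonneg (z 0).im) (sq_nonneg ((z 0).im ^ 2 - 1 / 2)),
      sq_nonneg ((z 0).im ^ 2 - 1 / 6)]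
  exact le_of_sq_le_sq (by linarith) (norm_nonneg _)

lemma rho_sub_smul_gradRho_le (hz : rho z ≤ 0) {t : ℝ} (ht₀ : 0 ≤ t) (ht : t ≤ 1 / 4) :
    rho (z - t • gradRho z) ≤ rho z := by
  have im_sq_le_one : (z 0).im ^ 2 ≤ 1 :=
    (sq_le_one_iff_abs_le_one _).2 (abs_realCoords_le_one hz 1)
  have coord_one : (z - t • gradRho z) 1 = ((1 - 2 * t : ℝ) : ℂ) * z 1 := by
    rw [PiLp.sub_apply, PiLp.smul_apply, gradRho_one, Complex.real_smul]
    push_cast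
    ring
  have re_coord_zero : ((z - t • gradRho z) 0).re = (1 - 2 * t) * (z 0).re := by
    rw [PiLp.sub_apply, PiLp.smul_apply, Complex.sub_re, Complex.smul_re, re_gradRho_zero,
      smul_eq_mul]
    ring
  have im_coord_zero : ((z - t • gradRho z) 0).im = (1 - 4 * (t * (z 0).im ^ 2)) * (z 0).im := by
    rw [PiLp.sub_apply, PiLp.smul_apply, Complex.sub_im, Complex.smul_im, im_gradRho_zero,
      smul_eq_mul]
    ring
  have factor_sq_le : (1 - 2 * t) ^ 2 ≤ 1 := pow_le_one₀ (by linarith) (by linarith)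
  have factor_pow_le : (1 - 4 * (t * (z 0).im ^ 2)) ^ 4 ≤ 1 :=
    pow_le_one₀ (by nlinarith) (by nlinarith [mul_nonneg ht₀ (sq_nonneg (z 0).im)])
  rw [rho, rho, coord_one, re_coord_zero, im_coord_zero, norm_mul, Complex.norm_real, mul_pow,
    mul_pow, mul_pow, Real.norm_eq_abs, sq_abs]
  gcongr <;> apply mul_le_of_le_one_left (by positivity) <;> assumption

lemma rho_add_smul_Nvec_nonpos (hz : z ∈ bD) {ε : ℝ} (hε₀ : 0 ≤ ε) (hε : ε ≤ 1 / 4) :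
    rho (z + ε • Nvec z) ≤ 0 := by
  have inv_le : ‖gradRho z‖⁻¹ ≤ 1 := inv_le_one_of_one_le₀ (one_le_norm_gradRho (le_of_eq hz.symm))
  have step_le : ε * ‖gradRho z‖⁻¹ ≤ 1 / 4 := (mul_le_of_le_one_right hε₀ inv_le).trans hε
  rw [Nvec, smul_smul, mul_neg, neg_smul, ← sub_eq_add_neg]
  exact (rho_sub_smul_gradRho_le (le_of_eq hz) (by positivity) step_le).trans (le_of_eq hz)

lemma norm_Nvec_le_one (z : C2) : ‖Nvec z‖ ≤ 1 := by
  rw [Nvec, norm_smul, norm_neg, norm_inv, norm_norm]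
  exact inv_mul_le_one

lemma norm_Delta_sub_Delta_le (hw : rho w ≤ 0) (z ζ : C2) :
    ‖Delta w z - Delta w ζ‖ ≤ 4 * ‖z - ζ‖ := by
  have coeff₀_le : ‖((w 0).re : ℂ) - 2 * I * ((w 0).im : ℂ) ^ 3‖ ≤ 3 := by
    have re_le : |(w 0).re| ≤ 1 := abs_realCoords_le_one hw 0
    have im_le : |(w 0).im| ^ 3 ≤ 1 := pow_le_one₀ (abs_nonneg _) (abs_realCoords_le_one hw 1)
    refine (norm_sub_le _ _).trans ?_
    simp only [norm_mul, norm_pow, Complex.norm_real, Complex.norm_ofNat, Complex.norm_I,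
      Real.norm_eq_abs]
    linarith
  have coeff₁_le : ‖starRingEnd ℂ (w 1)‖ ≤ 1 := by
    rw [RCLike.norm_conj, ← sq_le_one_iff₀ (norm_nonneg _)]
    rw [rho] at hw
    linarith [sq_nonneg (w 0).re, show 0 ≤ (w 0).im ^ 4 by positivity]
  calc ‖Delta w z - Delta w ζ‖
      = ‖(((w 0).re : ℂ) - 2 * I * ((w 0).im : ℂ) ^ 3) * (z - ζ) 0 +
          starRingEnd ℂ (w 1) * (z - ζ) 1‖ := by
        rw [norm_sub_rev, Delta, Delta, PiLp.sub_apply, PiLp.sub_apply]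
        ring_nf
    _ ≤ 3 * ‖z - ζ‖ + 1 * ‖z - ζ‖ := by
        refine norm_add_le_of_le ?_ ?_ <;> rw [norm_mul] <;> gcongr <;>
          exact PiLp.norm_apply_le _ _
    _ = 4 * ‖z - ζ‖ := by ring

lemma norm_Delta_add_smul_Nvec_sub_Delta_le (hw : rho w ≤ 0) (z : C2) {ε : ℝ} (hε : 0 ≤ ε) :
    ‖Delta w (z + ε • Nvec z) - Delta w z‖ ≤ 4 * ε := by
  refine (norm_Delta_sub_Delta_le hw _ _).trans ?_
  rw [add_sub_cancel_left, norm_smul, Real.norm_of_nonneg hε]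
  gcongr
  exact mul_le_of_le_one_right hε (norm_Nvec_le_one z)

end Geometry

/-- For every `0 < β < 1/4` there are `C < ∞` and `ε₀ > 0` such that for every `z ∈ bD` and
`0 < ε < ε₀`: `∫_{bD} |Δ(w, z+εN(z))⁻¹ − Δ(w,z)⁻¹| dH³(w) ≤ C·ε^β`
(the integrand is interpreted as `+∞` where `Δ` vanishes, e.g. at `w = z`). -/
theorem stmt7 (β : ℝ) (hβ0 : 0 < β) (hβ : β < 1 / 4) :
    ∃ C ε₀ : ℝ, 0 < ε₀ ∧ ∀ z ∈ bD, ∀ ε : ℝ, 0 < ε → ε < ε₀ →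
      ∫⁻ w in bD,
          (if Delta w z = 0 ∨ Delta w (z + ε • Nvec z) = 0 then (⊤ : ℝ≥0∞)
            else ENNReal.ofReal ‖(Delta w (z + ε • Nvec z))⁻¹ - (Delta w z)⁻¹‖) ∂μH[3]
        ≤ ENNReal.ofReal (C * ε ^ β) := by
  obtain ⟨K, hK⟩ : ∃ K : ℝ≥0, ∀ ζ, rho ζ ≤ 0 →
      ∫⁻ w in bD, ‖Delta w ζ‖ₑ ^ (-(1 + β)) ∂μH[3] ≤ K :=
    exists_lintegral_enorm_Delta_rpow_neg_le (by linarith) (by linarith)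
  refine ⟨2 * 4 ^ β * (K + K), 1 / 4, by norm_num, fun z hz ε hε₀ hε ↦ ?_⟩
  have measurable_kernel (ζ : C2) : Measurable fun w ↦ ‖Delta w ζ‖ₑ ^ (-(1 + β)) :=
    (measurable_enorm_Delta ζ).pow_const _
  calc _ ≤ ∫⁻ w in bD, ENNReal.ofReal (2 * (4 * ε) ^ β) *
          (‖Delta w (z + ε • Nvec z)‖ₑ ^ (-(1 + β)) + ‖Delta w z‖ₑ ^ (-(1 + β))) ∂μH[3] :=
        setLIntegral_mono' isClosed_bD.measurableSet fun w hw ↦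
          ite_top_norm_inv_sub_inv_le (by positivity)
            (norm_Delta_add_smul_Nvec_sub_Delta_le (le_of_eq hw) z hε₀.le) hβ0.le (by linarith)
    _ ≤ ENNReal.ofReal (2 * (4 * ε) ^ β) * (K + K) := by
        rw [lintegral_const_mul' _ _ ENNReal.ofReal_ne_top,
          lintegral_add_left (measurable_kernel _)]
        gcongr
        · exact hK _ (rho_add_smul_Nvec_nonpos hz hε₀.le hε.le)
        · exact hK _ (le_of_eq hz)
    _ = ENNReal.ofReal (2 * 4 ^ β * (K + K) * ε ^ β) := by
        rw [Real.mul_rpow (by norm_num) hε₀.le, ← ENNReal.coe_add, ← ENNReal.ofReal_coe_nnreal,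
          ← ENNReal.ofReal_mul (by positivity), NNReal.coe_add]
        ring_nf

end
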